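/- Let A, B ∈ ℂ^{m×n}. The ⊤-Stein matrix equation X = A Xᵀ B + C has a unique solution X ∈ ℂ^{m×n} for every C ∈ ℂ^{m×n} if and only if the following two conditions hold: (i) for every eigenvalue λ of AᵀB with λ ≠ −1, the number 1/λ is not an eigenvalue of AᵀB (in particular 1 ∉ σ(AᵀB) since 1 = 1/1), and (ii) if −1 is an eigenvalue of AᵀB, then −1 is a simple eigenvalue (algebraic multiplicity one). -/

import Mathlib

open Matrix Polynomial

/-!
Multiplying the homogeneous equation `X = AXᵀB` by `Aᵀ` or `B` reduces it to the square equation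
`Y = YᵀM` with `M = AᵀB`, which says that the bilinear form `β` with matrix `Y` satisfies
`β(x, y) = β(My, x)`. Applying this twice, `β` is `M`-invariant, so it pairs the generalized
eigenspaces of `a` and `b` to zero unless `ab = 1`. If only `a = b = -1` can occur, and the
generalized eigenspace of `-1` is a line, then `β` is antisymmetric on that line, hence zero.

Conversely, let `φ` and `ψ` be independent generalized left eigenvectors for `a` and `b = a⁻¹`. Then
`φ ⊗ ψ + a ψ ⊗ φ`, corrected by a multiple of `φ ⊗ φ` when `ψ` lies above `φ` in a Jordan chain,
is a nonzero solution; for `a = 1` a single left eigenvector `φ` gives the solution `φ ⊗ φ`.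
-/

open LinearMap Module

section GeneralizedEigenspaces

variable {R M : Type*} [CommRing R] [AddCommGroup M] [Module R M]
variable {K V : Type*} [Field K] [AddCommGroup V] [Module K V]

theorem maxGenEigenspace_le_of_comap_le {f : End R M} {μ : R} {p : Submodule R M}
    (hp : p.comap (f - μ • 1) ≤ p) : f.maxGenEigenspace μ ≤ p := by
  intro x hx
  obtain ⟨k, hk⟩ := (f.mem_maxGenEigenspace μ x).mp hx
  clear hx
  induction k generalizing x with
  | zero => simp [show x = 0 from hk]
  | succ k ih => exact hp (ih (by rwa [pow_succ, End.mul_apply] at hk))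

theorem exists_linearIndependent_pair_of_one_lt_finrank_maxGenEigenspace {f : End K V} {μ : K}
    (h : 1 < finrank K (f.maxGenEigenspace μ)) :
    ∃ (u v : V) (c : K), LinearIndependent K ![u, v] ∧ f u = μ • u ∧ f v = μ • v + c • u := by
  have not_le {p : Submodule K V} [FiniteDimensional K p] (hp : finrank K p ≤ 1) :
      ¬ p.comap (f - μ • 1) ≤ p := fun hle ↦
    absurd (Submodule.finrank_mono (maxGenEigenspace_le_of_comap_le hle)) (by lia)
  obtain ⟨u, hu, hu0⟩ := SetLike.not_le_iff_exists.mp (not_le (p := ⊥) (by simp))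
  obtain ⟨v, hv, hvu⟩ := SetLike.not_le_iff_exists.mp
    (not_le (p := Submodule.span K {u}) (finrank_span_singleton hu0).le)
  obtain ⟨c, hc⟩ := Submodule.mem_span_singleton.mp hv
  refine ⟨u, v, c, (LinearIndependent.pair_iff' hu0).mpr fun a ha ↦
    hvu (Submodule.mem_span_singleton.mpr ⟨a, ha⟩), ?_, ?_⟩
  · simpa [sub_eq_zero] using hu
  · simpa [eq_sub_iff_add_eq', eq_comm] using hc

theorem ker_aeval_prod_X_sub_C_pow_le_iSup_maxGenEigenspace (f : End K V) (s : Finset K)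
    (k : K → ℕ) :
    ker (aeval f (∏ a ∈ s, (X - C a) ^ k a)) ≤ ⨆ a, f.maxGenEigenspace a := by
  classical
  induction s using Finset.induction_on with
  | empty => simp [End.one_eq_id]
  | insert a s ha ih =>
    have hcop : IsCoprime ((X - C a) ^ k a) (∏ b ∈ s, (X - C b) ^ k b) :=
      IsCoprime.prod_right fun b hb ↦ IsCoprime.pow <|
        pairwise_coprime_X_sub_C Function.injective_id (ne_of_mem_of_not_mem hb ha).symm
    rw [Finset.prod_insert ha, ← sup_ker_aeval_eq_ker_aeval_mul_of_coprime f hcop]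
    refine sup_le (le_iSup_of_le a fun x hx ↦ ?_) ih
    exact (f.mem_maxGenEigenspace a x).mpr
      ⟨k a, by simpa [Algebra.algebraMap_eq_smul_one] using hx⟩

theorem iSup_maxGenEigenspace_eq_top_of_splits_charpoly [FiniteDimensional K V] {f : End K V}
    (hf : f.charpoly.Splits) : ⨆ a, f.maxGenEigenspace a = ⊤ := by
  classical
  have hprod : f.charpoly = ∏ a ∈ f.charpoly.roots.toFinset,
      (X - C a) ^ f.charpoly.roots.count a := by
    rw [← Finset.prod_multiset_map_count]
    exact hf.eq_prod_roots_of_monic f.charpoly_monic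
  have hker := ker_aeval_prod_X_sub_C_pow_le_iSup_maxGenEigenspace f
    f.charpoly.roots.toFinset f.charpoly.roots.count
  rwa [← hprod, f.aeval_self_charpoly, ker_zero, top_le_iff] at hker

theorem maxGenEigenspace_eq_span_singleton_of_rootMultiplicity_eq_one [FiniteDimensional K V]
    {f : End K V} {μ : K} {w : V} (hw : f.HasEigenvector μ w)
    (hμ : f.charpoly.rootMultiplicity μ = 1) :
    f.maxGenEigenspace μ = Submodule.span K {w} := by
  refine (Submodule.eq_of_le_of_finrank_eq ?_ ?_).symm
  · exact (Submodule.span_singleton_le_iff_mem _ _).mpr (End.eigenspace_le_maxGenEigenspace hw.1)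
  · rw [finrank_span_singleton hw.2, finrank_maxGenEigenspace_eq, hμ]

theorem charpoly_dualMap [Module.Free R M] [Module.Finite R M] (f : End R M) :
    charpoly f.dualMap = f.charpoly := by
  let b := Free.chooseBasis R M
  rw [← charpoly_toMatrix f b, ← charpoly_toMatrix f.dualMap b.dualBasis, dualMap_def,
    toMatrix_transpose, Matrix.charpoly_transpose]

theorem hasEigenvalue_dualMap_iff [IsDomain R] [Module.Free R M] [Module.Finite R M]
    {f : End R M} {μ : R} :
    End.HasEigenvalue f.dualMap μ ↔ f.HasEigenvalue μ := by
  rw [End.hasEigenvalue_iff_isRoot_charpoly, End.hasEigenvalue_iff_isRoot_charpoly,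
    charpoly_dualMap]

end GeneralizedEigenspaces

section BilinearPairings

variable {R M N P : Type*} [CommRing R] [AddCommGroup M] [Module R M]
  [AddCommGroup N] [Module R N] [AddCommGroup P] [Module R P]

theorem bilin_eq_zero_of_iSup_eq_top {ι κ : Sort*} {p : ι → Submodule R M} {q : κ → Submodule R N}
    (hp : ⨆ i, p i = ⊤) (hq : ⨆ j, q j = ⊤) {β : M →ₗ[R] N →ₗ[R] P}
    (h : ∀ i j, ∀ x ∈ p i, ∀ y ∈ q j, β x y = 0) : β = 0 := by
  have apply_eq_zero (i : ι) (x : M) (hx : x ∈ p i) : β x = 0 :=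
    ker_eq_top.mp <| top_le_iff.mp <| hq ▸ iSup_le fun j y hy ↦ h i j x hx y hy
  exact ker_eq_top.mp <| top_le_iff.mp <| hp ▸ iSup_le apply_eq_zero

theorem bilin_apply_eq_zero_of_mem_maxGenEigenspace [IsDomain R] [IsTorsionFree R P]
    {f : End R M} {g : End R N} {β : M →ₗ[R] N →ₗ[R] P} (hβ : ∀ x y, β (f x) (g y) = β x y)
    {a b : R} (hab : a * b ≠ 1) {x : M} (hx : x ∈ f.maxGenEigenspace a)
    {y : N} (hy : y ∈ g.maxGenEigenspace b) : β x y = 0 := by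
  obtain ⟨k, hk⟩ := (f.mem_maxGenEigenspace a x).mp hx
  obtain ⟨l, hl⟩ := (g.mem_maxGenEigenspace b y).mp hy
  clear hx hy
  induction k generalizing x y l with
  | zero => simp [show x = 0 from hk]
  | succ k ihk =>
    induction l generalizing y with
    | zero => simp [show y = 0 from hl]
    | succ l ihl =>
      have hk' := hk
      have hl' := hl
      rw [pow_succ, End.mul_apply] at hk' hl'
      have hx : f x = a • x + (f - a • 1) x := by simp
      have hy : g y = b • y + (g - b • 1) y := by simp
      have key : β x y = (a * b) • β x y := calc
        β x y = β (a • x + (f - a • 1) x) (b • y + (g - b • 1) y) := by rw [← hx, ← hy, hβ]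
        _ = (a * b) • β x y := by
          simp only [map_add, map_smul, LinearMap.add_apply, LinearMap.smul_apply,
            ihk hk' (l + 1) hl, ihk hk' l hl', ihl hl', smul_zero, add_zero, smul_smul, mul_comm]
      have : (1 - a * b) • β x y = 0 := by rw [sub_smul, one_smul, ← key, sub_self]
      exact (smul_eq_zero.mp this).resolve_left (sub_ne_zero.mpr hab.symm)

end BilinearPairings

section Asymmetry

/-- `f` is an asymmetry of the bilinear form `β`: swapping the arguments of `β` amounts to
applying `f` to one of them. For nondegenerate `β` this determines `f`; here `β` is arbitrary and
regarded as the unknown. In matrices, `β` with Gram matrix `Y` has asymmetry `M` iff `Y = YᵀM`. -/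
def IsAsymmetry {R M : Type*} [CommSemiring R] [AddCommMonoid M] [Module R M]
    (f : End R M) (β : LinearMap.BilinForm R M) : Prop :=
  ∀ x y, β x y = β (f y) x

theorem IsAsymmetry.apply_map_map {R M : Type*} [CommSemiring R] [AddCommMonoid M] [Module R M]
    {f : End R M} {β : LinearMap.BilinForm R M} (h : IsAsymmetry f β) (x y : M) :
    β (f x) (f y) = β x y := by
  rw [h x y, h (f y) x]

theorem IsAsymmetry.apply_self_eq_zero {R M : Type*} [CommRing R] [NoZeroDivisors R]
    [NeZero (2 : R)] [AddCommGroup M] [Module R M] {f : End R M} {β : LinearMap.BilinForm R M}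
    (h : IsAsymmetry f β) {w : M} (hw : f w = -w) : β w w = 0 := by
  have antisymm : β w w = -β w w := by
    conv_lhs => rw [h, hw, map_neg, LinearMap.neg_apply]
  have : 2 * β w w = 0 := by linear_combination antisymm
  exact (mul_eq_zero.mp this).resolve_left two_ne_zero

variable {K V : Type*} [Field K] [AddCommGroup V] [Module K V] {f : End K V}

theorem exists_isAsymmetry_ne_zero_of_dualMap_eq_self {φ : Dual K V} (hφ0 : φ ≠ 0)
    (hφ : f.dualMap φ = φ) : ∃ β : LinearMap.BilinForm K V, IsAsymmetry f β ∧ β ≠ 0 := by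
  refine ⟨φ.smulRight φ, fun x y ↦ ?_, fun h ↦ hφ0 ?_⟩
  · have : φ (f y) = φ y := congr($hφ y)
    simp [this, mul_comm]
  · ext x
    simpa using congr($h x x)

theorem exists_isAsymmetry_ne_zero_of_linearIndependent_pair {φ ψ : Dual K V} {a b c : K}
    (hli : LinearIndependent K ![φ, ψ]) (hφ : f.dualMap φ = a • φ)
    (hψ : f.dualMap ψ = b • ψ + c • φ) (hab : a * b = 1) (ha : a ≠ 1) :
    ∃ β : LinearMap.BilinForm K V, IsAsymmetry f β ∧ β ≠ 0 := by
  let d := a * c / (1 - a)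
  have hd : d = a * (c + d) := by
    have : 1 - a ≠ 0 := sub_ne_zero.mpr ha.symm
    simp only [d]
    field_simp
    ring
  refine ⟨φ.smulRight ψ + a • ψ.smulRight φ + d • φ.smulRight φ, fun x y ↦ ?_, fun h ↦ ?_⟩
  · have hφy : φ (f y) = a * φ y := congr($hφ y)
    have hψy : ψ (f y) = b * ψ y + c * φ y := congr($hψ y)
    simp only [LinearMap.add_apply, LinearMap.smul_apply, smulRight_apply, smul_eq_mul, hφy, hψy]
    linear_combination (-(φ x * ψ y)) * hab + φ x * φ y * hd
  · refine hli.ne_zero 0 (LinearMap.ext fun x ↦ ?_)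
    refine (LinearIndependent.pair_iff.mp hli (a * ψ x + d * φ x) (φ x) ?_).2
    ext y
    have hxy := congr($h x y)
    simp only [LinearMap.add_apply, LinearMap.smul_apply, smulRight_apply, smul_eq_mul,
      LinearMap.zero_apply] at hxy ⊢
    linear_combination hxy

variable [FiniteDimensional K V]

theorem exists_isAsymmetry_ne_zero_of_hasEigenvalue_of_mul_eq_one {a b : K}
    (ha : f.HasEigenvalue a) (hb : f.HasEigenvalue b) (hab : a * b = 1) (ha1 : a ≠ -1) :
    ∃ β : LinearMap.BilinForm K V, IsAsymmetry f β ∧ β ≠ 0 := by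
  obtain ⟨φ, hφ⟩ := (hasEigenvalue_dualMap_iff.mpr ha).exists_hasEigenvector
  obtain ⟨ψ, hψ⟩ := (hasEigenvalue_dualMap_iff.mpr hb).exists_hasEigenvector
  obtain rfl | hne := eq_or_ne a b
  · obtain rfl : a = 1 := (mul_self_eq_one_iff.mp hab).resolve_right ha1
    exact exists_isAsymmetry_ne_zero_of_dualMap_eq_self hφ.2 (by simpa using hφ.apply_eq_smul)
  · have hli : LinearIndependent K ![φ, ψ] :=
      End.eigenvectors_linearIndependent' f.dualMap ![a, b]
        (by simpa [Function.Injective, Fin.forall_fin_two] using ⟨hne, hne.symm⟩) _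
        (by simpa [Fin.forall_fin_two] using ⟨hφ, hψ⟩)
    refine exists_isAsymmetry_ne_zero_of_linearIndependent_pair (c := 0) hli hφ.apply_eq_smul
      (by simpa using hψ.apply_eq_smul) hab ?_
    rintro rfl
    exact hne (by simpa using hab.symm)

theorem exists_isAsymmetry_ne_zero_of_one_lt_rootMultiplicity [NeZero (2 : K)]
    (h : 1 < f.charpoly.rootMultiplicity (-1)) :
    ∃ β : LinearMap.BilinForm K V, IsAsymmetry f β ∧ β ≠ 0 := by
  rw [← charpoly_dualMap, ← finrank_maxGenEigenspace_eq] at h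
  obtain ⟨φ, ψ, c, hli, hφ, hψ⟩ :=
    exists_linearIndependent_pair_of_one_lt_finrank_maxGenEigenspace h
  refine exists_isAsymmetry_ne_zero_of_linearIndependent_pair hli hφ hψ (by norm_num) fun h1 ↦ ?_
  exact two_ne_zero (α := K) (by linear_combination -h1)

theorem IsAsymmetry.eq_zero [NeZero (2 : K)] {β : LinearMap.BilinForm K V} (hβ : IsAsymmetry f β)
    (hf : f.charpoly.Splits)
    (hrec : ∀ a, f.HasEigenvalue a → a ≠ -1 → ∀ b, f.HasEigenvalue b → a * b ≠ 1)
    (hsimple : f.HasEigenvalue (-1) → f.charpoly.rootMultiplicity (-1) = 1) : β = 0 := by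
  have htop := iSup_maxGenEigenspace_eq_top_of_splits_charpoly hf
  have hasEigenvalue {a : K} {x : V} (hx : x ∈ f.maxGenEigenspace a) (hx0 : x ≠ 0) :
      f.HasEigenvalue a :=
    End.HasUnifEigenvalue.lt (k := ⊤) zero_lt_one ((Submodule.ne_bot_iff _).mpr ⟨x, hx, hx0⟩)
  refine bilin_eq_zero_of_iSup_eq_top htop htop fun a b x hx y hy ↦ ?_
  obtain hab | hab := ne_or_eq (a * b) 1
  · exact bilin_apply_eq_zero_of_mem_maxGenEigenspace hβ.apply_map_map hab hx hy
  obtain rfl | hx0 := eq_or_ne x 0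
  · simp
  obtain rfl | hy0 := eq_or_ne y 0
  · simp
  have ha := hasEigenvalue hx hx0
  obtain rfl : a = -1 := by
    by_contra ha1
    exact hrec a ha ha1 b (hasEigenvalue hy hy0) hab
  obtain rfl : b = -1 := by linear_combination -hab
  obtain ⟨w, hw⟩ := ha.exists_hasEigenvector
  rw [maxGenEigenspace_eq_span_singleton_of_rootMultiplicity_eq_one hw (hsimple ha),
    Submodule.mem_span_singleton] at hx hy
  obtain ⟨s, rfl⟩ := hx
  obtain ⟨t, rfl⟩ := hy
  have hww : β w w = 0 := hβ.apply_self_eq_zero (by simpa using hw.apply_eq_smul)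
  simp [hww]

theorem forall_isAsymmetry_eq_zero_iff [NeZero (2 : K)] (hf : f.charpoly.Splits) :
    (∀ β : LinearMap.BilinForm K V, IsAsymmetry f β → β = 0) ↔
      (∀ a, f.HasEigenvalue a → a ≠ -1 → ∀ b, f.HasEigenvalue b → a * b ≠ 1) ∧
        (f.HasEigenvalue (-1) → f.charpoly.rootMultiplicity (-1) = 1) := by
  refine ⟨fun h ↦ ?_, fun ⟨hrec, hsimple⟩ β hβ ↦ hβ.eq_zero hf hrec hsimple⟩
  have not_exists : ¬ ∃ β : LinearMap.BilinForm K V, IsAsymmetry f β ∧ β ≠ 0 :=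
    fun ⟨β, hβ, hβ0⟩ ↦ hβ0 (h β hβ)
  refine ⟨fun a ha ha1 b hb hab ↦ not_exists ?_, fun h1 ↦ le_antisymm ?_ ?_⟩
  · exact exists_isAsymmetry_ne_zero_of_hasEigenvalue_of_mul_eq_one ha hb hab ha1
  · exact not_lt.mp (not_exists ∘ exists_isAsymmetry_ne_zero_of_one_lt_rootMultiplicity)
  · exact (rootMultiplicity_pos f.charpoly_monic.ne_zero).mpr
      ((f.hasEigenvalue_iff_isRoot_charpoly _).mp h1)

end Asymmetry

section TStein

/-- The ⊤-Stein operator `X ↦ X - A Xᵀ B`, for which the ⊤-Stein equation `X = A Xᵀ B + C` reads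
`tSteinOperator A B X = C`. -/
def tSteinOperator {R m n : Type*} [CommRing R] [Fintype m] [Fintype n] (A B : Matrix m n R) :
    End R (Matrix m n R) where
  toFun X := X - A * Xᵀ * B
  map_add' X Y := by
    rw [transpose_add, Matrix.mul_add, Matrix.add_mul, add_sub_add_comm]
  map_smul' c X := by simp [smul_sub]

variable {R K m n : Type*} [CommRing R] [Field K] [Fintype m] [Fintype n]

theorem tSteinOperator_apply_eq_iff {A B X C : Matrix m n R} :
    tSteinOperator A B X = C ↔ X = A * Xᵀ * B + C :=
  sub_eq_iff_eq_add'

theorem ker_tSteinOperator_eq_bot_iff {A B : Matrix m n R} :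
    ker (tSteinOperator A B) = ⊥ ↔ ∀ X : Matrix m n R, X = A * Xᵀ * B → X = 0 := by
  simp only [ker_eq_bot', tSteinOperator_apply_eq_iff, add_zero]

theorem forall_existsUnique_tStein_iff_ker_eq_bot {A B : Matrix m n K} :
    (∀ C : Matrix m n K, ∃! X : Matrix m n K, X = A * Xᵀ * B + C) ↔
      ker (tSteinOperator A B) = ⊥ := by
  simp only [← tSteinOperator_apply_eq_iff, ← Function.bijective_iff_existsUnique,
    ← End.isUnit_iff, isUnit_iff_ker_eq_bot]

theorem ker_tSteinOperator_eq_bot_iff_forall_eq_transpose_mul {A B : Matrix m n R} :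
    ker (tSteinOperator A B) = ⊥ ↔ ∀ Y : Matrix n n R, Y = Yᵀ * (Aᵀ * B) → Y = 0 := by
  rw [ker_tSteinOperator_eq_bot_iff]
  refine ⟨fun h Y hY ↦ ?_, fun h X hX ↦ ?_⟩
  · have hAY : A * Y = 0 := h (A * Y) <| by
      rw [transpose_mul, Matrix.mul_assoc, Matrix.mul_assoc, ← hY]
    rw [hY, ← Matrix.mul_assoc, ← transpose_mul, hAY, transpose_zero, Matrix.zero_mul]
  · have hXB : Xᵀ * B = 0 := h (Xᵀ * B) <| by
      rw [← Matrix.mul_assoc, ← transpose_mul, ← Matrix.mul_assoc, ← hX]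
    rw [hX, Matrix.mul_assoc, hXB, Matrix.mul_zero]

variable [DecidableEq n]

theorem isAsymmetry_toLin'_toBilin'_iff {R : Type*} [CommSemiring R] {M Y : Matrix n n R} :
    IsAsymmetry (toLin' M) (toBilin' Y) ↔ Y = Yᵀ * M := by
  have swap (x y : n → R) : toBilin' Y (toLin' M y) x = toBilin' (Yᵀ * M) x y := by
    rw [toBilin'_apply', toBilin'_apply', toLin'_apply, ← mulVec_mulVec, mulVec_transpose,
      dotProduct_comm x, ← dotProduct_mulVec]
  simp only [IsAsymmetry, swap, ← LinearMap.ext_iff₂, EmbeddingLike.apply_eq_iff_eq]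

theorem forall_eq_transpose_mul_imp_eq_zero_iff [NeZero (2 : K)] {M : Matrix n n K}
    (hM : M.charpoly.Splits) :
    (∀ Y : Matrix n n K, Y = Yᵀ * M → Y = 0) ↔
      (∀ a ∈ spectrum K M, a ≠ -1 → ∀ b ∈ spectrum K M, a * b ≠ 1) ∧
        (-1 ∈ spectrum K M → M.charpoly.rootMultiplicity (-1) = 1) := by
  have h := forall_isAsymmetry_eq_zero_iff (f := toLin' M) (by rwa [charpoly_toLin'])
  simp only [End.hasEigenvalue_iff_mem_spectrum, spectrum_toLin', charpoly_toLin'] at h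
  rw [← h, ← toBilin'.toEquiv.forall_congr_right]
  simp [isAsymmetry_toLin'_toBilin'_iff]

theorem tStein_uniquely_solvable_iff_general [NeZero (2 : K)] (A B : Matrix m n K)
    (hAB : (Aᵀ * B).charpoly.Splits) :
    (∀ C : Matrix m n K, ∃! X : Matrix m n K, X = A * Xᵀ * B + C) ↔
      ((∀ lam ∈ spectrum K (Aᵀ * B), lam ≠ -1 → ∀ mu ∈ spectrum K (Aᵀ * B), lam * mu ≠ 1) ∧
        (-1 ∈ spectrum K (Aᵀ * B) → (Aᵀ * B).charpoly.rootMultiplicity (-1) = 1)) := by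
  rw [forall_existsUnique_tStein_iff_ker_eq_bot,
    ker_tSteinOperator_eq_bot_iff_forall_eq_transpose_mul,
    forall_eq_transpose_mul_imp_eq_zero_iff hAB]

end TStein

/-- **Unique solvability of the ⊤-Stein equation `X = AXᵀB + C`.**
The equation has a unique solution for every right-hand side `C` iff
(i) for every eigenvalue `λ` of `AᵀB` with `λ ≠ -1`, the number `1/λ` is not an
eigenvalue of `AᵀB` (expressed product-wise as `λ·μ ≠ 1` for all eigenvalues `μ`,
which in particular rules out `1` being an eigenvalue), and
(ii) if `-1` is an eigenvalue of `AᵀB`, it is simple (algebraic multiplicity one). -/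
theorem tStein_uniquely_solvable_iff (m n : ℕ) (A B : Matrix (Fin m) (Fin n) ℂ) :
    (∀ C : Matrix (Fin m) (Fin n) ℂ, ∃! X : Matrix (Fin m) (Fin n) ℂ,
        X = A * Xᵀ * B + C) ↔
      ((∀ lam ∈ spectrum ℂ (Aᵀ * B), lam ≠ -1 →
          ∀ mu ∈ spectrum ℂ (Aᵀ * B), lam * mu ≠ 1) ∧
        ((-1 : ℂ) ∈ spectrum ℂ (Aᵀ * B) →
          ((Aᵀ * B).charpoly).rootMultiplicity (-1) = 1)) :=
  tStein_uniquely_solvable_iff_general A B (IsAlgClosed.splits _)
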